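/- Let G be a simple hypergraph with edge ideal I = I(G) ⊆ S = K[x_1, ..., x_n]. The following conditions are equivalent: (1) G has the max-flow-min-cut property, i.e., the dual linear programming system max{⟨1, y⟩ : y ∈ ℝ^m_{≥0}, Ay ≤ c} = min{⟨c, z⟩ : z ∈ ℝ^n_{≥0}, A^T z ≥ 1} has integral optimal solutions y and z for every nonnegative integer vector c ∈ ℤ^n_{≥0}, where A is the incidence matrix of G; (2) I^{(q)} = I^q for all q ≥ 0; (3) the associated graded ring gr_I = ⊕_{q ≥ 0} I^q / I^{q+1} is reduced; (4) I is normally torsion-free, i.e., Ass(S/I^q) = Ass(S/I) for all q ≥ 1. -/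

import Mathlib

open MvPolynomial

/-- The incidence matrix of the hypergraph with edges `E j`:
`A i j = 1` if `x_i ∈ e_j` and `0` otherwise. -/
def incMatrix {n m : ℕ} (E : Fin m → Finset (Fin n)) (i : Fin n) (j : Fin m) : ℕ :=
  if i ∈ E j then 1 else 0

/-- The edge ideal of the hypergraph with edges `E j`. -/
noncomputable def edgeIdealF {n m : ℕ} (K : Type*) [Field K] (E : Fin m → Finset (Fin n)) :
    Ideal (MvPolynomial (Fin n) K) :=
  Ideal.span {p | ∃ j : Fin m, p = ∏ i ∈ E j, X i}

/-- The `q`-th symbolic power of a squarefree monomial ideal: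
`I^{(q)} = ⋂_{p ∈ Ass(S/I)} p^q`. -/
noncomputable def symbPow {n : ℕ} {K : Type*} [Field K]
    (I : Ideal (MvPolynomial (Fin n) K)) (q : ℕ) : Ideal (MvPolynomial (Fin n) K) :=
  ⨅ p ∈ associatedPrimes (MvPolynomial (Fin n) K) (MvPolynomial (Fin n) K ⧸ I), p ^ q

/-- The ideal `I·R(I)` of the Rees algebra `R(I)`, generated by the elements of `I`
placed in degree `0`; the quotient `R(I)/I·R(I)` is the associated graded ring
`gr_I = ⊕_q I^q/I^{q+1}`. -/
noncomputable def grKernel {R : Type*} [CommRing R] (I : Ideal R) : Ideal (reesAlgebra I) :=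
  Ideal.span {x : reesAlgebra I | ∃ a ∈ I, (x : Polynomial R) = Polynomial.C a}

/-- The max-flow-min-cut property for the hypergraph with incidence matrix `A`:
for every nonnegative integer vector `c`, the dual linear programming system
`max {⟨1,y⟩ : y ≥ 0, Ay ≤ c} = min {⟨c,z⟩ : z ≥ 0, Aᵀz ≥ 1}` has integral optimal
solutions `y` and `z`. -/
def HasMFMC {n m : ℕ} (E : Fin m → Finset (Fin n)) : Prop :=
  ∀ c : Fin n → ℕ, ∃ (y : Fin m → ℕ) (z : Fin n → ℕ),
    (∀ i : Fin n, ∑ j : Fin m, y j * incMatrix E i j ≤ c i) ∧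
    (∀ j : Fin m, 1 ≤ ∑ i : Fin n, incMatrix E i j * z i) ∧
    (∀ y' : Fin m → ℝ, (∀ j, 0 ≤ y' j) →
      (∀ i : Fin n, ∑ j : Fin m, y' j * (incMatrix E i j : ℝ) ≤ (c i : ℝ)) →
      ∑ j : Fin m, y' j ≤ ∑ j : Fin m, (y j : ℝ)) ∧
    (∀ z' : Fin n → ℝ, (∀ i, 0 ≤ z' i) →
      (∀ j : Fin m, (1 : ℝ) ≤ ∑ i : Fin n, (incMatrix E i j : ℝ) * z' i) →
      ∑ i : Fin n, (c i : ℝ) * (z i : ℝ) ≤ ∑ i : Fin n, (c i : ℝ) * z' i) ∧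
    (∑ j : Fin m, (y j : ℝ)) = ∑ i : Fin n, (c i : ℝ) * (z i : ℝ)

/-- The monomial with exponent vector `c` is divisible by a product of `q` edges. -/
def HasPacking {n m : ℕ} (E : Fin m → Finset (Fin n)) (c : Fin n → ℕ) (q : ℕ) : Prop :=
  ∃ y : Fin m → ℕ, (∀ i, ∑ j, y j * incMatrix E i j ≤ c i) ∧ q ≤ ∑ j, y j

/-- `C` is a vertex cover: it meets every edge. -/
def IsVertexCover {n m : ℕ} (E : Fin m → Finset (Fin n)) (C : Finset (Fin n)) : Prop :=
  ∀ j, ∃ i ∈ E j, i ∈ C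

section Combinatorics

variable {n m : ℕ} {E : Fin m → Finset (Fin n)}

lemma isVertexCover_univ (hne : ∀ j, (E j).Nonempty) : IsVertexCover E Finset.univ :=
  fun j ↦ (hne j).imp fun i hi ↦ ⟨hi, Finset.mem_univ i⟩

lemma IsVertexCover.exists_minimal_le {C : Finset (Fin n)} (hC : IsVertexCover E C) :
    ∃ D ⊆ C, Minimal (IsVertexCover E) D :=
  exists_minimal_le_of_wellFoundedLT (IsVertexCover E) C hC

lemma exists_edge_inter_eq_singleton {C : Finset (Fin n)} (hC : Minimal (IsVertexCover E) C)
    {i : Fin n} (hi : i ∈ C) : ∃ j, i ∈ E j ∧ ∀ k ∈ E j, k ∈ C → k = i := by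
  by_contra! h
  have hcov : IsVertexCover E (C.erase i) := by
    intro j
    obtain ⟨k, hk, hkC⟩ := hC.prop j
    by_cases hki : k = i
    · subst hki
      obtain ⟨l, hl, hlC, hlk⟩ := h j hk
      exact ⟨l, hl, Finset.mem_erase.2 ⟨hlk, hlC⟩⟩
    · exact ⟨k, hk, Finset.mem_erase.2 ⟨hki, hkC⟩⟩
  exact Finset.notMem_erase i C (hC.le_of_le hcov (Finset.erase_subset i C) hi)

lemma weak_duality {y : Fin m → ℝ} {z c : Fin n → ℝ} (hy : ∀ j, 0 ≤ y j) (hz : ∀ i, 0 ≤ z i)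
    (hyc : ∀ i, ∑ j, y j * (incMatrix E i j : ℝ) ≤ c i)
    (hz1 : ∀ j, (1 : ℝ) ≤ ∑ i, (incMatrix E i j : ℝ) * z i) :
    ∑ j, y j ≤ ∑ i, c i * z i := by
  calc ∑ j, y j ≤ ∑ j, y j * ∑ i, (incMatrix E i j : ℝ) * z i :=
        Finset.sum_le_sum fun j _ ↦ le_mul_of_one_le_right (hy j) (hz1 j)
    _ = ∑ i, (∑ j, y j * (incMatrix E i j : ℝ)) * z i := by
        simp_rw [Finset.mul_sum, Finset.sum_mul]
        rw [Finset.sum_comm]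
        simp_rw [mul_assoc]
    _ ≤ ∑ i, c i * z i :=
        Finset.sum_le_sum fun i _ ↦ mul_le_mul_of_nonneg_right (hyc i) (hz i)

lemma sum_mem_eq_sum_mul (C : Finset (Fin n)) (c : Fin n → ℕ) :
    ∑ i ∈ C, c i = ∑ i, c i * (if i ∈ C then 1 else 0) := by
  simp

lemma IsVertexCover.one_le_sum {C : Finset (Fin n)} (hC : IsVertexCover E C) (j : Fin m) :
    1 ≤ ∑ i, incMatrix E i j * (if i ∈ C then 1 else 0) := by
  obtain ⟨i, hi, hiC⟩ := hC j
  refine le_trans ?_ (Finset.single_le_sum (fun _ _ ↦ Nat.zero_le _) (Finset.mem_univ i))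
  simp [incMatrix, hi, hiC]

lemma HasPacking.le_sum_cover {c : Fin n → ℕ} {q : ℕ} (h : HasPacking E c q)
    {C : Finset (Fin n)} (hC : IsVertexCover E C) : q ≤ ∑ i ∈ C, c i := by
  obtain ⟨y, hy, hq⟩ := h
  refine hq.trans ?_
  have := weak_duality (E := E) (y := fun j ↦ (y j : ℝ)) (c := fun i ↦ (c i : ℝ))
    (z := fun i ↦ ((if i ∈ C then 1 else 0 : ℕ) : ℝ)) (fun _ ↦ Nat.cast_nonneg _)
    (fun _ ↦ Nat.cast_nonneg _) (fun i ↦ by exact_mod_cast hy i)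
    (fun j ↦ by exact_mod_cast hC.one_le_sum j)
  rw [sum_mem_eq_sum_mul C c]
  exact_mod_cast this

/-- The max-flow-min-cut property in terms of edge packings and vertex covers. -/
lemma hasMFMC_iff (hne : ∀ j, (E j).Nonempty) :
    HasMFMC E ↔ ∀ (c : Fin n → ℕ) (q : ℕ),
      (∀ C, IsVertexCover E C → q ≤ ∑ i ∈ C, c i) → HasPacking E c q := by
  classical
  constructor
  · intro h c q hq
    obtain ⟨y, z, hy, hz, -, -, heq⟩ := h c
    refine ⟨y, hy, ?_⟩
    have hcov : IsVertexCover E (Finset.univ.filter fun i ↦ 1 ≤ z i) := by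
      intro j
      obtain ⟨i, -, hi⟩ := Finset.exists_ne_zero_of_sum_ne_zero (Nat.one_le_iff_ne_zero.1 (hz j))
      rw [mul_ne_zero_iff] at hi
      refine ⟨i, ?_, by simpa using Nat.one_le_iff_ne_zero.2 hi.2⟩
      by_contra hn
      exact hi.1 (by simp [incMatrix, hn])
    have heq' : ∑ j, y j = ∑ i, c i * z i := by exact_mod_cast heq
    rw [heq']
    refine (hq _ hcov).trans ?_
    rw [sum_mem_eq_sum_mul]
    refine Finset.sum_le_sum fun i _ ↦ Nat.mul_le_mul_left _ ?_
    split_ifs with hi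
    · simpa using hi
    · exact Nat.zero_le _
  · intro h c
    obtain ⟨C, hC, hmin⟩ := Finset.exists_min_image
      (Finset.univ.filter (IsVertexCover E)) (fun C ↦ ∑ i ∈ C, c i)
      ⟨Finset.univ, by simpa using isVertexCover_univ hne⟩
    have hC : IsVertexCover E C := by simpa using hC
    obtain ⟨y, hy, hq⟩ := h c (∑ i ∈ C, c i) fun D hD ↦ hmin D (by simpa using hD)
    have hle : ∑ i, (c i : ℝ) * ((if i ∈ C then 1 else 0 : ℕ) : ℝ) ≤ ∑ j, (y j : ℝ) := by
      rw [sum_mem_eq_sum_mul] at hq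
      exact_mod_cast hq
    have hyR : ∀ i, ∑ j, (y j : ℝ) * (incMatrix E i j : ℝ) ≤ (c i : ℝ) :=
      fun i ↦ by exact_mod_cast hy i
    have hzR : ∀ j, (1 : ℝ) ≤ ∑ i, (incMatrix E i j : ℝ) * ((if i ∈ C then 1 else 0 : ℕ) : ℝ) :=
      fun j ↦ by exact_mod_cast hC.one_le_sum j
    refine ⟨y, fun i ↦ if i ∈ C then 1 else 0, hy, hC.one_le_sum, fun y' hy' hyc ↦ ?_,
      fun z' hz' hz1 ↦ ?_, le_antisymm ?_ hle⟩
    · exact (weak_duality hy' (fun _ ↦ Nat.cast_nonneg _) hyc hzR).trans hle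
    · exact hle.trans (weak_duality (fun _ ↦ Nat.cast_nonneg _) hz' hyR hz1)
    · exact weak_duality (fun _ ↦ Nat.cast_nonneg _) (fun _ ↦ Nat.cast_nonneg _) hyR hzR

lemma HasPacking.mono {c d : Fin n → ℕ} {q r : ℕ} (h : HasPacking E c q) (hcd : c ≤ d)
    (hrq : r ≤ q) : HasPacking E d r := by
  obtain ⟨y, hy, hq⟩ := h
  exact ⟨y, fun i ↦ (hy i).trans (hcd i), hrq.trans hq⟩

lemma HasPacking.zero (c : Fin n → ℕ) : HasPacking E c 0 :=
  ⟨0, by simp, Nat.zero_le _⟩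

lemma HasPacking.add {c d : Fin n → ℕ} {q r : ℕ} (hc : HasPacking E c q)
    (hd : HasPacking E d r) : HasPacking E (c + d) (q + r) := by
  obtain ⟨y, hy, hq⟩ := hc
  obtain ⟨z, hz, hr⟩ := hd
  refine ⟨y + z, fun i ↦ ?_, ?_⟩
  · simp only [Pi.add_apply, add_mul, Finset.sum_add_distrib]
    exact add_le_add (hy i) (hz i)
  · simp only [Pi.add_apply, Finset.sum_add_distrib]
    exact add_le_add hq hr

lemma HasPacking.single (j : Fin m) : HasPacking E (fun i ↦ incMatrix E i j) 1 :=
  ⟨Pi.single j 1, fun i ↦ by simp [Pi.single_apply], by simp⟩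

lemma HasPacking.of_add_single {c : Fin n → ℕ} {i : Fin n} {q : ℕ}
    (h : HasPacking E (c + Pi.single i 1) (q + 1)) : HasPacking E c q := by
  obtain ⟨y, hy, hq⟩ := h
  by_cases hi : ∑ j, y j * incMatrix E i j ≤ c i
  · refine ⟨y, fun k ↦ ?_, by omega⟩
    by_cases hk : k = i
    · exact hk ▸ hi
    · simpa [hk] using hy k
  · obtain ⟨j, -, hj⟩ := Finset.exists_ne_zero_of_sum_ne_zero
      (show ∑ j, y j * incMatrix E i j ≠ 0 by omega)
    rw [mul_ne_zero_iff] at hj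
    have hij : incMatrix E i j = 1 := by
      unfold incMatrix at hj ⊢
      split_ifs at hj ⊢ <;> simp_all
    have hyj : y = Function.update y j (y j - 1) + Pi.single j 1 := by
      ext k
      by_cases hk : k = j
      · subst hk
        simp only [Pi.add_apply, Function.update_self, Pi.single_eq_same]
        omega
      · simp [hk]
    set y' := Function.update y j (y j - 1)
    have hsum : ∀ k, ∑ l, y l * incMatrix E k l = ∑ l, y' l * incMatrix E k l + incMatrix E k j := by
      intro k
      rw [hyj]
      simp [add_mul, Finset.sum_add_distrib, Pi.single_apply]
    refine ⟨y', fun k ↦ ?_, ?_⟩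
    · have h1 := hy k
      rw [hsum] at h1
      by_cases hk : k = i
      · subst hk
        simp only [Pi.add_apply, Pi.single_eq_same] at h1
        omega
      · simp only [Pi.add_apply, Pi.single_eq_of_ne hk, add_zero] at h1
        omega
    · rw [hyj] at hq
      simpa [Finset.sum_add_distrib] using hq

end Combinatorics

/-- Superadditive, homogeneous functions on `ℕⁿ` which grow by at most one along each
coordinate. -/
structure IsConcaveForm {n : ℕ} (f : (Fin n → ℕ) → ℕ) : Prop where
  add_le : ∀ a b, f a + f b ≤ f (a + b)
  smul : ∀ (k : ℕ) a, f (k • a) = k * f a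
  add_single_le : ∀ a i, f (a + Pi.single i 1) ≤ f a + 1

namespace IsConcaveForm

variable {n : ℕ} {f : (Fin n → ℕ) → ℕ}

lemma add_le_add_sum (hf : IsConcaveForm f) (a b : Fin n → ℕ) : f (a + b) ≤ f a + ∑ i, b i := by
  induction hs : ∑ i, b i generalizing b with
  | zero =>
    have : b = 0 := by
      ext i
      simpa using (Finset.sum_eq_zero_iff.1 hs) i (Finset.mem_univ i)
    simp [this]
  | succ s ih =>
    obtain ⟨i, -, hi⟩ := Finset.exists_ne_zero_of_sum_ne_zero (show ∑ i, b i ≠ 0 by omega)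
    have hb : b = Function.update b i (b i - 1) + Pi.single i 1 := by
      ext k
      by_cases hk : k = i
      · subst hk
        simp only [Pi.add_apply, Function.update_self, Pi.single_eq_same]
        omega
      · simp [hk]
    set b' := Function.update b i (b i - 1)
    have hs' : ∑ k, b' k = s := by
      rw [hb] at hs
      simpa [Finset.sum_add_distrib] using hs
    have h1 := ih b' hs'
    have h2 := hf.add_single_le (a + b') i
    rw [hb, ← add_assoc]
    omega

/-- The directional derivative of `f` at `u`. -/
lemma exists_linear_along (hf : IsConcaveForm f) (u : Fin n → ℕ) :
    ∃ g, IsConcaveForm g ∧ (∀ a, f a ≤ g a) ∧ g u = f u ∧ (∀ a, g (a + u) = g a + g u) ∧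
      ∀ w, (∀ a, f (a + w) = f a + f w) → g w = f w ∧ ∀ a, g (a + w) = g a + g w := by
  have hlim : ∀ a, ∃ L K, ∀ k ≥ K, f (a + k • u) = k * f u + L := by
    intro a
    let d : ℕ →o ℕ :=
      ⟨fun k ↦ f (a + k • u) - k * f u, monotone_nat_of_le_succ fun k ↦ by
        have h1 := hf.add_le (a + k • u) u
        rw [add_assoc, ← succ_nsmul] at h1
        have h2 : (k + 1) * f u = k * f u + f u := by ring
        omega⟩
    have hb : ∀ k, f (a + k • u) ≤ k * f u + ∑ i, a i := by
      intro k
      have := hf.add_le_add_sum (k • u) a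
      rwa [hf.smul, add_comm (k • u)] at this
    have hlow : ∀ k, k * f u ≤ f (a + k • u) := by
      intro k
      have := hf.add_le a (k • u)
      rw [hf.smul] at this
      omega
    obtain ⟨K, hK⟩ : ∃ K, ∀ k, K ≤ k → d k = d K := by
      have hfin : (Set.range d).Finite :=
        (Set.finite_Iic (∑ i, a i)).subset <| by
          rintro _ ⟨k, rfl⟩
          have := hb k
          simp only [Set.mem_Iic, d, OrderHom.coe_mk]
          omega
      obtain ⟨_, ⟨K, rfl⟩, hmax⟩ := hfin.exists_maximal (Set.range_nonempty d)
      exact ⟨K, fun k hk ↦ le_antisymm (hmax ⟨k, rfl⟩ (d.monotone hk)) (d.monotone hk)⟩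
    refine ⟨d K, K, fun k hk ↦ ?_⟩
    rw [← hK k hk]
    have := hlow k
    simp only [d, OrderHom.coe_mk]
    omega
  choose g K hg using hlim
  have hgu : g u = f u := by
    have h1 := hg u (K u) le_rfl
    rw [← succ_nsmul', hf.smul] at h1
    have h2 : (K u + 1) * f u = K u * f u + f u := by ring
    omega
  have hgw : ∀ w, (∀ a, f (a + w) = f a + f w) → g w = f w ∧ ∀ a, g (a + w) = g a + g w := by
    intro w hw
    have h0 : g w = f w := by
      have h1 := hg w (K w) le_rfl
      rw [add_comm, hw, hf.smul] at h1
      omega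
    refine ⟨h0, fun a ↦ ?_⟩
    have h1 := hg a (max (K a) (K (a + w))) (le_max_left _ _)
    have h2 := hg (a + w) (max (K a) (K (a + w))) (le_max_right _ _)
    rw [add_right_comm, hw] at h2
    omega
  refine ⟨g, ⟨fun a b ↦ ?_, fun k a ↦ ?_, fun a i ↦ ?_⟩, fun a ↦ ?_, hgu, fun a ↦ ?_, hgw⟩
  · set k := max (max (K a) (K b)) (K (a + b))
    have h1 := hg a k (by simp [k])
    have h2 := hg b k (by simp [k])
    have h3 := hg (a + b) (k + k) (le_trans (by simp [k]) (Nat.le_add_right k k))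
    have h4 := hf.add_le (a + k • u) (b + k • u)
    rw [show a + k • u + (b + k • u) = a + b + (k + k) • u by rw [add_nsmul]; abel] at h4
    have h5 : (k + k) * f u = k * f u + k * f u := by ring
    omega
  · rcases Nat.eq_zero_or_pos k with rfl | hk
    · have h1 := hg 0 (K 0) le_rfl
      rw [zero_add, hf.smul] at h1
      simp only [zero_smul, zero_mul]
      omega
    · set l := max (K a) (K (k • a))
      have h1 := hg a l (by simp [l])
      have h2 := hg (k • a) (k * l)
        (le_trans (by simp [l]) (Nat.le_mul_of_pos_left l hk))
      rw [mul_nsmul', ← nsmul_add, hf.smul, h1, mul_add, mul_assoc] at h2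
      omega
  · set k := max (K a) (K (a + Pi.single i 1))
    have h1 := hg a k (by simp [k])
    have h2 := hg (a + Pi.single i 1) k (by simp [k])
    have h3 := hf.add_single_le (a + k • u) i
    rw [add_right_comm] at h3
    omega
  · have h1 := hg a (K a) le_rfl
    have h2 := hf.add_le a (K a • u)
    rw [hf.smul] at h2
    omega
  · have h1 := hg a (max (K a) (K (a + u))) (le_max_left _ _)
    have h2 := hg (a + u) (max (K a) (K (a + u))) (le_max_right _ _)
    have h3 := hg a (max (K a) (K (a + u)) + 1) ((le_max_left _ _).trans (Nat.le_succ _))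
    rw [add_assoc, ← succ_nsmul'] at h2
    rw [add_mul, one_mul] at h3
    omega

/-- A supporting linear form with `0`-`1` coefficients at a prescribed point. -/
lemma exists_supporting (hf : IsConcaveForm f) (c : Fin n → ℕ) :
    ∃ C : Finset (Fin n), (∀ a, f a ≤ ∑ i ∈ C, a i) ∧ ∑ i ∈ C, c i = f c := by
  classical
  have key : ∀ A : Finset (Fin n), ∃ g, IsConcaveForm g ∧ (∀ a, f a ≤ g a) ∧ g c = f c ∧
      (∀ a, g (a + c) = g a + g c) ∧
      ∀ i ∈ A, ∀ a, g (a + Pi.single i 1) = g a + g (Pi.single i 1) := by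
    intro A
    induction A using Finset.induction_on with
    | empty =>
      obtain ⟨g, hg, hfg, hgc, hadd, -⟩ := hf.exists_linear_along c
      exact ⟨g, hg, hfg, hgc, hadd, by simp⟩
    | insert i A _ ih =>
      obtain ⟨g, hg, hfg, hgc, hadd, hA⟩ := ih
      obtain ⟨h, hh, hgh, -, hi, hkeep⟩ := hg.exists_linear_along (Pi.single i 1)
      refine ⟨h, hh, fun a ↦ (hfg a).trans (hgh a), (hkeep c hadd).1.trans hgc,
        (hkeep c hadd).2, fun k hk ↦ ?_⟩
      rcases Finset.mem_insert.1 hk with rfl | hk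
      · exact hi
      · exact (hkeep _ (hA k hk)).2
  obtain ⟨g, hg, hfg, hgc, -, hlin⟩ := key Finset.univ
  have h0 : g 0 = 0 := by simpa using hg.smul 0 0
  have h01 : ∀ i, g (Pi.single i 1) ≤ 1 := fun i ↦ by simpa [h0] using hg.add_single_le 0 i
  have hsmul : ∀ i (k : ℕ) a, g (a + Pi.single i k) = g a + k * g (Pi.single i 1) := by
    intro i k
    induction k with
    | zero => simp
    | succ k ih =>
      intro a
      rw [Pi.single_add, ← add_assoc, hlin i (Finset.mem_univ i), ih, add_mul, one_mul, add_assoc]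
  have hsum : ∀ (a : Fin n → ℕ) (A : Finset (Fin n)),
      g (∑ i ∈ A, Pi.single i (a i)) = ∑ i ∈ A, a i * g (Pi.single i 1) := by
    intro a A
    induction A using Finset.induction_on with
    | empty => simpa using h0
    | insert i A hi ih => rw [Finset.sum_insert hi, Finset.sum_insert hi, add_comm, hsmul, ih,
        add_comm]
  have heval : ∀ a, g a = ∑ i ∈ Finset.univ.filter (fun i ↦ g (Pi.single i 1) = 1), a i := by
    intro a
    have h1 := hsum a Finset.univ
    rw [Finset.univ_sum_single] at h1
    rw [h1, Finset.sum_filter]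
    refine Finset.sum_congr rfl fun i _ ↦ ?_
    have := h01 i
    split_ifs with hi
    · simp [hi]
    · simp [show g (Pi.single i 1) = 0 by omega]
  exact ⟨_, fun a ↦ (hfg a).trans (heval a).le, (heval c).symm.trans hgc⟩

end IsConcaveForm

/-- If the packing number is homogeneous, then it equals the covering number. -/
lemma hasMFMC_of_packing_homogeneous {n m : ℕ} {E : Fin m → Finset (Fin n)}
    (hne : ∀ j, (E j).Nonempty)
    (h : ∀ (c : Fin n → ℕ) (k q : ℕ), HasPacking E c q → HasPacking E (k • c) (k * q + 1) →
      HasPacking E c (q + 1)) : HasMFMC E := by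
  classical
  let f : (Fin n → ℕ) → ℕ := fun c ↦ Nat.findGreatest (HasPacking E c) (∑ i, c i)
  have hf : ∀ c q, q ≤ f c ↔ HasPacking E c q := by
    intro c q
    constructor
    · exact fun hq ↦ (Nat.findGreatest_spec (P := HasPacking E c) (Nat.zero_le _)
        (HasPacking.zero c)).mono le_rfl hq
    · exact fun hq ↦ Nat.le_findGreatest (hq.le_sum_cover (isVertexCover_univ hne)) hq
  have hpack : ∀ c, HasPacking E c (f c) := fun c ↦ (hf c _).1 le_rfl
  have hadd : ∀ a b, f a + f b ≤ f (a + b) := fun a b ↦ (hf _ _).2 ((hpack a).add (hpack b))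
  have hform : IsConcaveForm f := by
    refine ⟨hadd, fun k a ↦ le_antisymm ?_ ?_, fun a i ↦ ?_⟩
    · by_contra! hlt
      have := (hf a _).2 (h a k (f a) (hpack a) ((hf _ _).1 hlt))
      omega
    · induction k with
      | zero => simp
      | succ k ih =>
        have := hadd (k • a) a
        rw [add_mul, one_mul, succ_nsmul]
        omega
    · by_contra! hlt
      have := (hf a _).2 ((hf _ _).1 hlt).of_add_single
      omega
  rw [hasMFMC_iff hne]
  intro c q hq
  obtain ⟨C, hC, hCc⟩ := hform.exists_supporting c
  have hcov : IsVertexCover E C := by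
    intro j
    have h1 := ((hf _ _).2 (HasPacking.single j)).trans (hC fun i ↦ incMatrix E i j)
    obtain ⟨i, hi, hij⟩ := Finset.exists_ne_zero_of_sum_ne_zero (Nat.one_le_iff_ne_zero.1 h1)
    refine ⟨i, ?_, hi⟩
    by_contra hn
    exact hij (by simp [incMatrix, hn])
  exact (hf c q).1 ((hq C hcov).trans hCc.le)

section AssociatedGraded

variable {R : Type*} [CommRing R] {I : Ideal R}

lemma mem_grKernel_of_monomial (i : ℕ) {a : R} (ha : a ∈ I ^ (i + 1))
    (h : Polynomial.monomial i a ∈ reesAlgebra I) :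
    (⟨Polynomial.monomial i a, h⟩ : reesAlgebra I) ∈ grKernel I := by
  rw [pow_succ'] at ha
  induction ha using Submodule.mul_induction_on' with
  | mem_mul_mem b hb c hc =>
    have hbmem : Polynomial.C b ∈ reesAlgebra I := Subalgebra.algebraMap_mem _ b
    have hcmem : Polynomial.monomial i c ∈ reesAlgebra I := reesAlgebra.monomial_mem.2 hc
    have hmul : (⟨Polynomial.monomial i (b * c), h⟩ : reesAlgebra I) =
        ⟨Polynomial.monomial i c, hcmem⟩ * ⟨Polynomial.C b, hbmem⟩ :=
      Subtype.ext (by simp [mul_comm])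
    rw [hmul]
    exact Ideal.mul_mem_left _ _ (Ideal.subset_span ⟨b, hb, rfl⟩)
  | add x hx y hy ihx ihy =>
    have hle : I * I ^ i ≤ I ^ i := Ideal.mul_le_right
    have hxmem : Polynomial.monomial i x ∈ reesAlgebra I := reesAlgebra.monomial_mem.2 (hle hx)
    have hymem : Polynomial.monomial i y ∈ reesAlgebra I := reesAlgebra.monomial_mem.2 (hle hy)
    have hadd : (⟨Polynomial.monomial i (x + y), h⟩ : reesAlgebra I) =
        ⟨Polynomial.monomial i x, hxmem⟩ + ⟨Polynomial.monomial i y, hymem⟩ :=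
      Subtype.ext (by simp)
    rw [hadd]
    exact add_mem (ihx hxmem) (ihy hymem)

lemma mem_grKernel_iff {x : reesAlgebra I} :
    x ∈ grKernel I ↔ ∀ i, (x : Polynomial R).coeff i ∈ I ^ (i + 1) := by
  constructor
  · intro hx
    induction hx using Submodule.span_induction with
    | mem x hx =>
      obtain ⟨a, ha, hxa⟩ := hx
      intro i
      rw [hxa, Polynomial.coeff_C]
      split_ifs with hi
      · simpa [hi] using ha
      · exact zero_mem _
    | zero => simp
    | add x y _ _ ihx ihy => exact fun i ↦ by simpa using add_mem (ihx i) (ihy i)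
    | smul a x _ ih =>
      intro i
      rw [smul_eq_mul, Subalgebra.coe_mul, Polynomial.coeff_mul]
      refine sum_mem fun p hp ↦ ?_
      rw [← Finset.HasAntidiagonal.mem_antidiagonal.1 hp, add_assoc, pow_add]
      exact Ideal.mul_mem_mul (a.2 p.1) (ih p.2)
  · intro hx
    have hmem : ∀ i, Polynomial.monomial i ((x : Polynomial R).coeff i) ∈ reesAlgebra I :=
      fun i ↦ reesAlgebra.monomial_mem.2 (x.2 i)
    have hsum : x = ∑ i ∈ (x : Polynomial R).support, ⟨_, hmem i⟩ :=
      Subtype.ext (by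
        rw [AddSubmonoidClass.coe_finsetSum]
        exact (x : Polynomial R).as_sum_support)
    rw [hsum]
    exact sum_mem fun i _ ↦ mem_grKernel_of_monomial i (hx i) _

lemma isReduced_gr_of_sq
    (h : ∀ (q : ℕ) (f : R), f ^ 2 ∈ I ^ (2 * q + 1) → f ∈ I ^ (q + 1)) :
    IsReduced (reesAlgebra I ⧸ grKernel I) := by
  rw [isReduced_iff_pow_one_lt 2 one_lt_two]
  intro x hx
  obtain ⟨x, rfl⟩ := Ideal.Quotient.mk_surjective x
  rw [← map_pow, Ideal.Quotient.eq_zero_iff_mem, mem_grKernel_iff] at hx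
  rw [Ideal.Quotient.eq_zero_iff_mem, mem_grKernel_iff]
  intro i
  induction i using Nat.strong_induction_on with
  | _ i ih =>
    refine h i _ ?_
    have h2 := hx (2 * i)
    rw [Subalgebra.coe_pow, sq, Polynomial.coeff_mul,
      ← Finset.add_sum_erase _ _ (show (i, i) ∈ Finset.HasAntidiagonal.antidiagonal (2 * i) by
        simp [two_mul])] at h2
    rw [sq]
    refine (Submodule.add_mem_iff_left _ (sum_mem fun p hp ↦ ?_)).1 h2
    rw [Finset.mem_erase, Finset.HasAntidiagonal.mem_antidiagonal] at hp
    obtain ⟨hne, hp⟩ := hp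
    rcases lt_trichotomy p.1 i with hlt | heq | hgt
    · rw [← hp, add_right_comm, pow_add]
      exact Ideal.mul_mem_mul (ih _ hlt) (x.2 _)
    · exact absurd (Prod.ext heq (show p.2 = i by omega)) hne
    · rw [← hp, add_assoc, pow_add]
      exact Ideal.mul_mem_mul (x.2 _) (ih _ (by omega))

lemma mem_pow_succ_of_isReduced_gr [IsReduced (reesAlgebra I ⧸ grKernel I)] {q k : ℕ} {f : R}
    (hf : f ∈ I ^ q) (hk : f ^ k ∈ I ^ (k * q + 1)) : f ∈ I ^ (q + 1) := by
  let x : reesAlgebra I := ⟨Polynomial.monomial q f, reesAlgebra.monomial_mem.2 hf⟩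
  have hx : IsNilpotent (Ideal.Quotient.mk (grKernel I) x) := by
    refine ⟨k, ?_⟩
    rw [← map_pow, Ideal.Quotient.eq_zero_iff_mem, mem_grKernel_iff]
    intro i
    rw [Subalgebra.coe_pow, Polynomial.monomial_pow, Polynomial.coeff_monomial]
    split_ifs with hi
    · rwa [← hi, mul_comm q]
    · exact zero_mem _
  have := mem_grKernel_iff.1 (Ideal.Quotient.eq_zero_iff_mem.1 hx.eq_zero) q
  simpa [x] using this

end AssociatedGraded

section EdgeIdeal

variable {n m : ℕ} {K : Type*} [Field K] {E : Fin m → Finset (Fin n)}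

lemma prod_edge_eq_monomial (j : Fin m) :
    (∏ i ∈ E j, X i : MvPolynomial (Fin n) K) =
      monomial (Finsupp.equivFunOnFinite.symm fun i ↦ incMatrix E i j) 1 := by
  rw [monomial_eq]
  simp only [map_one, one_mul]
  rw [Finsupp.prod_fintype _ _ (by simp), ← Finset.prod_subset (Finset.subset_univ (E j))]
  · exact Finset.prod_congr rfl fun i hi ↦ by simp [incMatrix, hi]
  · exact fun i _ hi ↦ by simp [incMatrix, hi]

lemma mem_span_hasPacking {q : ℕ} {f : MvPolynomial (Fin n) K} :
    f ∈ Ideal.span ((fun s ↦ monomial s (1 : K)) '' {s : Fin n →₀ ℕ | HasPacking E s q}) ↔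
      ∀ s ∈ f.support, HasPacking E s q := by
  rw [mem_ideal_span_monomial_image]
  exact forall₂_congr fun s _ ↦
    ⟨fun ⟨t, ht, hts⟩ ↦ HasPacking.mono ht hts le_rfl, fun h ↦ ⟨s, h, le_rfl⟩⟩

lemma monomial_mem_edgeIdeal_pow {c : Fin n →₀ ℕ} {q : ℕ} (h : HasPacking E c q) :
    monomial c (1 : K) ∈ edgeIdealF K E ^ q := by
  obtain ⟨y, hy, hq⟩ := h
  let d : Fin n →₀ ℕ := ∑ j, y j • Finsupp.equivFunOnFinite.symm fun i ↦ incMatrix E i j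
  have hd : d ≤ c := fun i ↦ by simpa [d, Finsupp.finsetSum_apply] using hy i
  have hprod : monomial d (1 : K) = ∏ j, (∏ i ∈ E j, X i) ^ y j := by
    simp_rw [prod_edge_eq_monomial, monomial_pow, one_pow, d]
    exact monomial_sum_one _ _
  rw [← tsub_add_cancel_of_le hd, ← one_mul (1 : K), ← monomial_mul, hprod]
  refine Ideal.mul_mem_left _ _ (Ideal.pow_le_pow_right hq ?_)
  rw [← Finset.prod_pow_eq_pow_sum]
  exact Ideal.prod_mem_prod fun j _ ↦ Ideal.pow_mem_pow (I := edgeIdealF K E)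
    (Ideal.subset_span ⟨j, rfl⟩) _

lemma mem_edgeIdeal_pow_iff {q : ℕ} {f : MvPolynomial (Fin n) K} :
    f ∈ edgeIdealF K E ^ q ↔ ∀ s ∈ f.support, HasPacking E s q := by
  rw [← mem_span_hasPacking]
  suffices edgeIdealF K E ^ q =
      Ideal.span ((fun s ↦ monomial s (1 : K)) '' {s : Fin n →₀ ℕ | HasPacking E s q}) by
    rw [this]
  refine le_antisymm ?_ (Ideal.span_le.2 ?_)
  · induction q with
    | zero => exact fun f _ ↦ mem_span_hasPacking.2 fun s _ ↦ HasPacking.zero _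
    | succ q ih =>
      rw [pow_succ]
      refine (Ideal.mul_mono_left ih).trans ?_
      rw [edgeIdealF, Ideal.span_mul_span', Ideal.span_le]
      rintro _ ⟨_, ⟨s, hs, rfl⟩, _, ⟨j, rfl⟩, rfl⟩
      rw [prod_edge_eq_monomial, SetLike.mem_coe, mem_span_hasPacking]
      intro t ht
      simp only [monomial_mul, mul_one] at ht
      rw [Finset.mem_singleton.1 (support_monomial_subset ht)]
      exact HasPacking.add hs (HasPacking.single j)
  · rintro _ ⟨s, hs, rfl⟩
    exact monomial_mem_edgeIdeal_pow hs

lemma monomial_mem_edgeIdeal_pow_iff {q : ℕ} {c : Fin n →₀ ℕ} :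
    monomial c (1 : K) ∈ edgeIdealF K E ^ q ↔ HasPacking E c q := by
  classical
  rw [mem_edgeIdeal_pow_iff, support_monomial]
  simp

end EdgeIdeal

section CoverIdeal

variable {n m : ℕ} {K : Type*} [Field K] {E : Fin m → Finset (Fin n)}

/-- The monomial prime ideal generated by the variables indexed by `C`. -/
noncomputable def coverIdeal (K : Type*) [Field K] {n : ℕ} (C : Finset (Fin n)) :
    Ideal (MvPolynomial (Fin n) K) :=
  Ideal.span (X '' (C : Set (Fin n)))

/-- The order of a polynomial in the variables indexed by `C`. -/
noncomputable def coverOrder (C : Finset (Fin n)) (f : MvPolynomial (Fin n) K) : ℕ∞ :=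
  (f : MvPowerSeries (Fin n) K).weightedOrder (fun i ↦ if i ∈ C then 1 else 0)

lemma weight_indicator (C : Finset (Fin n)) (s : Fin n →₀ ℕ) :
    Finsupp.weight (fun i ↦ if i ∈ C then 1 else 0) s = ∑ i ∈ C, s i := by
  rw [Finsupp.weight_apply, Finsupp.sum_fintype _ _ (by simp)]
  simp

lemma coverOrder_mul (C : Finset (Fin n)) (f g : MvPolynomial (Fin n) K) :
    coverOrder C (f * g) = coverOrder C f + coverOrder C g := by
  rw [coverOrder, coe_mul, MvPowerSeries.weightedOrder_mul, coverOrder, coverOrder]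

lemma le_coverOrder_iff {C : Finset (Fin n)} {f : MvPolynomial (Fin n) K} {q : ℕ} :
    q ≤ coverOrder C f ↔ ∀ s ∈ f.support, q ≤ ∑ i ∈ C, s i := by
  constructor
  · intro h s hs
    by_contra! hlt
    rw [mem_support_iff, ← coeff_coe] at hs
    refine hs (MvPowerSeries.coeff_eq_zero_of_lt_weightedOrder _ (lt_of_lt_of_le ?_ h))
    rw [weight_indicator]
    exact_mod_cast hlt
  · intro h
    refine MvPowerSeries.nat_le_weightedOrder _ fun s hs ↦ ?_
    rw [weight_indicator] at hs
    rw [coeff_coe]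
    by_contra hn
    exact absurd (h s (mem_support_iff.2 hn)) (by omega)

lemma mem_coverIdeal_iff {C : Finset (Fin n)} {f : MvPolynomial (Fin n) K} :
    f ∈ coverIdeal K C ↔ (1 : ℕ) ≤ coverOrder C f := by
  rw [coverIdeal, mem_ideal_span_X_image, le_coverOrder_iff]
  refine forall₂_congr fun s _ ↦ ?_
  rw [Nat.one_le_iff_ne_zero, Ne, Finset.sum_eq_zero_iff]
  simp

lemma monomial_mem_coverIdeal_pow (C : Finset (Fin n)) (s : Fin n →₀ ℕ) (a : K) :
    monomial s a ∈ coverIdeal K C ^ ∑ i ∈ C, s i := by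
  rw [monomial_eq, Finsupp.prod_fintype _ _ (by simp),
    ← Finset.prod_sdiff (Finset.subset_univ C), ← Finset.prod_pow_eq_pow_sum]
  refine Ideal.mul_mem_left _ _ (Ideal.mul_mem_left _ _ (Ideal.prod_mem_prod fun i hi ↦ ?_))
  exact Ideal.pow_mem_pow (I := coverIdeal K C) (Ideal.subset_span ⟨i, hi, rfl⟩) _

lemma mem_coverIdeal_pow_iff {C : Finset (Fin n)} {f : MvPolynomial (Fin n) K} {q : ℕ} :
    f ∈ coverIdeal K C ^ q ↔ q ≤ coverOrder C f := by
  constructor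
  · intro hf
    induction q generalizing f with
    | zero => simp
    | succ q ih =>
      rw [pow_succ] at hf
      induction hf using Submodule.mul_induction_on' with
      | mem_mul_mem a ha b hb =>
        rw [coverOrder_mul, Nat.cast_add]
        exact add_le_add (ih ha) (mem_coverIdeal_iff.1 hb)
      | add a _ b _ iha ihb =>
        rw [coverOrder, coe_add]
        exact (le_min iha ihb).trans (MvPowerSeries.min_weightedOrder_le_add _)
  · intro h
    rw [f.as_sum]
    exact sum_mem fun s hs ↦
      Ideal.pow_le_pow_right (le_coverOrder_iff.1 h s hs) (monomial_mem_coverIdeal_pow C s _)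

lemma mem_coverIdeal_pow_iff_support {C : Finset (Fin n)} {f : MvPolynomial (Fin n) K} {q : ℕ} :
    f ∈ coverIdeal K C ^ q ↔ ∀ s ∈ f.support, q ≤ ∑ i ∈ C, s i :=
  mem_coverIdeal_pow_iff.trans le_coverOrder_iff

lemma coverOrder_eq_zero {C : Finset (Fin n)} {f : MvPolynomial (Fin n) K}
    (hf : f ∉ coverIdeal K C) : coverOrder C f = 0 := by
  rw [mem_coverIdeal_iff, Nat.cast_one, Order.one_le_iff_ne_zero, not_not] at hf
  exact hf

lemma mem_coverIdeal_pow_of_mul_mem {C : Finset (Fin n)} {f g : MvPolynomial (Fin n) K} {q : ℕ}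
    (h : f * g ∈ coverIdeal K C ^ q) (hf : f ∉ coverIdeal K C) : g ∈ coverIdeal K C ^ q := by
  rwa [mem_coverIdeal_pow_iff, coverOrder_mul, coverOrder_eq_zero hf, zero_add,
    ← mem_coverIdeal_pow_iff] at h

instance isPrime_coverIdeal (C : Finset (Fin n)) : (coverIdeal K C).IsPrime where
  ne_top' := by
    classical
    rw [Ideal.ne_top_iff_one, coverIdeal, mem_ideal_span_X_image]
    simp [support_one]
  mem_or_mem' {f g} h := by
    by_contra! hn
    rw [mem_coverIdeal_iff, coverOrder_mul, coverOrder_eq_zero hn.1, coverOrder_eq_zero hn.2] at h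
    simp at h

lemma mem_coverIdeal_pow_succ_of_sq {C : Finset (Fin n)} {f : MvPolynomial (Fin n) K} {q : ℕ}
    (h : f ^ 2 ∈ coverIdeal K C ^ (2 * q + 1)) : f ∈ coverIdeal K C ^ (q + 1) := by
  rw [mem_coverIdeal_pow_iff] at h ⊢
  rw [sq, coverOrder_mul] at h
  generalize coverOrder C f = d at h ⊢
  cases d with
  | top => exact le_top
  | coe k =>
    norm_cast at h ⊢
    omega

lemma IsVertexCover.edgeIdeal_le {C : Finset (Fin n)} (hC : IsVertexCover E C) :
    edgeIdealF K E ≤ coverIdeal K C := by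
  refine Ideal.span_le.2 ?_
  rintro _ ⟨j, rfl⟩
  obtain ⟨i, hi, hiC⟩ := hC j
  exact Ideal.mem_of_dvd _ (Finset.dvd_prod_of_mem X hi) (Ideal.subset_span ⟨i, hiC, rfl⟩)

lemma prod_compl_notMem_coverIdeal (C : Finset (Fin n)) :
    ∏ i ∈ Cᶜ, X i ∉ coverIdeal K C := by
  rw [Ideal.IsPrime.prod_mem_iff]
  rintro ⟨i, hi, hiC⟩
  rw [coverIdeal, mem_ideal_span_X_image] at hiC
  obtain ⟨k, hk, hki⟩ := hiC (Finsupp.single i 1) (by simp [support_X])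
  rw [Finsupp.single_apply_ne_zero] at hki
  exact Finset.mem_compl.1 hi (hki.1 ▸ hk)

lemma coverIdeal_mul_span_le {C : Finset (Fin n)} (hC : Minimal (IsVertexCover E) C) :
    coverIdeal K C * Ideal.span {∏ i ∈ Cᶜ, X i} ≤ edgeIdealF K E := by
  rw [coverIdeal, Ideal.span_mul_span', Ideal.span_le]
  rintro _ ⟨_, ⟨i, hi, rfl⟩, _, rfl, rfl⟩
  obtain ⟨j, hij, hj⟩ := exists_edge_inter_eq_singleton hC hi
  have hdvd : (∏ k ∈ E j, X k : MvPolynomial (Fin n) K) ∣ X i * ∏ k ∈ Cᶜ, X k := by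
    rw [← Finset.prod_insert (by simpa using hi)]
    refine Finset.prod_dvd_prod_of_subset _ _ _ fun k hk ↦ ?_
    by_cases hkC : k ∈ C
    · simp [hj k hk hkC]
    · simp [hkC]
  exact Ideal.mem_of_dvd _ hdvd (Ideal.subset_span ⟨j, rfl⟩)

lemma pow_prod_compl_mul_mem {C : Finset (Fin n)} (hC : Minimal (IsVertexCover E) C) {q : ℕ}
    {f : MvPolynomial (Fin n) K} (hf : f ∈ coverIdeal K C ^ q) :
    (∏ i ∈ Cᶜ, X i) ^ q * f ∈ edgeIdealF K E ^ q := by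
  refine Ideal.pow_right_mono (coverIdeal_mul_span_le hC) q ?_
  rw [mul_pow, Ideal.span_singleton_pow, mul_comm _ f]
  exact Ideal.mul_mem_mul hf (Ideal.mem_span_singleton_self _)

lemma mem_associatedPrimes_quotient_iff {R : Type*} [CommRing R] [IsNoetherianRing R]
    {J P : Ideal R} :
    P ∈ associatedPrimes R (R ⧸ J) ↔ P.IsPrime ∧ ∃ f, ∀ a, a ∈ P ↔ a * f ∈ J := by
  rw [AssociatedPrimes.mem_iff, isAssociatedPrime_iff]
  refine and_congr_right fun _ ↦ ?_
  rw [(Ideal.Quotient.mk_surjective (I := J)).exists]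
  refine exists_congr fun f ↦ ?_
  rw [SetLike.ext_iff]
  refine forall_congr' fun a ↦ ?_
  rw [Submodule.mem_colon_singleton, Submodule.mem_bot, ← Ideal.Quotient.mk_eq_mk,
    ← Submodule.Quotient.mk_smul, Submodule.Quotient.mk_eq_zero, smul_eq_mul]

lemma coverIdeal_mem_associatedPrimes {C : Finset (Fin n)} (hC : Minimal (IsVertexCover E) C)
    {q : ℕ} (hq : q ≠ 0) :
    coverIdeal K C ∈ associatedPrimes (MvPolynomial (Fin n) K)
      (MvPolynomial (Fin n) K ⧸ edgeIdealF K E ^ q) := by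
  apply Module.associatedPrimes.minimalPrimes_annihilator_subset_associatedPrimes
  rw [Ideal.annihilator_quotient]
  refine ⟨⟨inferInstance, (Ideal.pow_le_self hq).trans hC.prop.edgeIdeal_le⟩, ?_⟩
  rintro P ⟨hP, hIP⟩ hPC p hp
  have hmul : p * ∏ i ∈ Cᶜ, X i ∈ P := hP.le_of_pow_le hIP
    (coverIdeal_mul_span_le hC (Ideal.mul_mem_mul hp (Ideal.mem_span_singleton_self _)))
  exact (hP.mem_or_mem hmul).resolve_right fun h ↦ prod_compl_notMem_coverIdeal C (hPC h)

lemma exists_eq_coverIdeal_of_mem_associatedPrimes {q : ℕ}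
    (h : ∀ f : MvPolynomial (Fin n) K,
      (∀ C, Minimal (IsVertexCover E) C → f ∈ coverIdeal K C ^ q) → f ∈ edgeIdealF K E ^ q)
    {P : Ideal (MvPolynomial (Fin n) K)}
    (hP : P ∈ associatedPrimes (MvPolynomial (Fin n) K)
      (MvPolynomial (Fin n) K ⧸ edgeIdealF K E ^ q)) :
    ∃ C, Minimal (IsVertexCover E) C ∧ P = coverIdeal K C := by
  classical
  obtain ⟨hprime, f, hf⟩ := mem_associatedPrimes_quotient_iff.1 hP
  obtain ⟨C, hC, hfC, hle⟩ : ∃ C, Minimal (IsVertexCover E) C ∧ f ∉ coverIdeal K C ^ q ∧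
      coverIdeal K C ≤ P := by
    by_contra! hcon
    have hex : ∀ C, ∃ g, g ∉ P ∧ (Minimal (IsVertexCover E) C → g * f ∈ coverIdeal K C ^ q) := by
      intro C
      by_cases hfC : Minimal (IsVertexCover E) C ∧ f ∉ coverIdeal K C ^ q
      · obtain ⟨g, hg, hgP⟩ := SetLike.not_le_iff_exists.1 (hcon C hfC.1 hfC.2)
        exact ⟨g ^ q, fun hgq ↦ hgP (hprime.mem_of_pow_mem q hgq),
          fun _ ↦ Ideal.mul_mem_right _ _ (Ideal.pow_mem_pow hg q)⟩
      · exact ⟨1, hprime.one_notMem, fun hC ↦ by simpa [hC] using hfC⟩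
    choose g hgP hg using hex
    have hprod : ∏ C, g C ∈ P := (hf _).2 <| h _ fun C hC ↦ by
      rw [← Finset.mul_prod_erase _ _ (Finset.mem_univ C), mul_right_comm]
      exact Ideal.mul_mem_right _ _ (hg C hC)
    obtain ⟨C, -, hC⟩ := Ideal.IsPrime.prod_mem_iff.1 hprod
    exact hgP C hC
  refine ⟨C, hC, le_antisymm (fun a ha ↦ ?_) hle⟩
  by_contra haC
  exact hfC (mem_coverIdeal_pow_of_mul_mem
    (Ideal.pow_right_mono hC.prop.edgeIdeal_le q ((hf a).1 ha)) haC)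

lemma mem_associatedPrimes_edgeIdeal_pow_iff {q : ℕ} (hq : q ≠ 0)
    (h : ∀ f : MvPolynomial (Fin n) K,
      (∀ C, Minimal (IsVertexCover E) C → f ∈ coverIdeal K C ^ q) → f ∈ edgeIdealF K E ^ q)
    {P : Ideal (MvPolynomial (Fin n) K)} :
    P ∈ associatedPrimes (MvPolynomial (Fin n) K)
      (MvPolynomial (Fin n) K ⧸ edgeIdealF K E ^ q) ↔
      ∃ C, Minimal (IsVertexCover E) C ∧ P = coverIdeal K C :=
  ⟨exists_eq_coverIdeal_of_mem_associatedPrimes h,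
    fun ⟨_, hC, hP⟩ ↦ hP ▸ coverIdeal_mem_associatedPrimes hC hq⟩

lemma hasPacking_one_of_cover {c : Fin n → ℕ}
    (h : ∀ C, Minimal (IsVertexCover E) C → 1 ≤ ∑ i ∈ C, c i) : HasPacking E c 1 := by
  by_contra hn
  have hcov : IsVertexCover E (Finset.univ.filter fun i ↦ c i = 0) := by
    intro j
    by_contra! hj
    refine hn ((HasPacking.single j).mono (fun i ↦ ?_) le_rfl)
    simp only [incMatrix]
    split_ifs with hi
    · simpa [Nat.one_le_iff_ne_zero] using hj i hi
    · exact Nat.zero_le _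
  obtain ⟨D, hD, hmin⟩ := hcov.exists_minimal_le
  have hzero : ∑ i ∈ D, c i = 0 :=
    Finset.sum_eq_zero fun i hi ↦ by simpa using hD hi
  have := h D hmin
  omega

lemma mem_edgeIdeal_of_forall_cover {f : MvPolynomial (Fin n) K}
    (h : ∀ C, Minimal (IsVertexCover E) C → f ∈ coverIdeal K C ^ 1) :
    f ∈ edgeIdealF K E ^ 1 :=
  mem_edgeIdeal_pow_iff.2 fun s hs ↦ hasPacking_one_of_cover fun C hC ↦
    mem_coverIdeal_pow_iff_support.1 (h C hC) s hs

lemma mem_associatedPrimes_edgeIdeal_iff {P : Ideal (MvPolynomial (Fin n) K)} :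
    P ∈ associatedPrimes (MvPolynomial (Fin n) K) (MvPolynomial (Fin n) K ⧸ edgeIdealF K E) ↔
      ∃ C, Minimal (IsVertexCover E) C ∧ P = coverIdeal K C := by
  have := mem_associatedPrimes_edgeIdeal_pow_iff (K := K) (E := E) one_ne_zero
    (fun _ ↦ mem_edgeIdeal_of_forall_cover) (P := P)
  rwa [pow_one] at this

lemma mem_symbPow_iff {q : ℕ} {f : MvPolynomial (Fin n) K} :
    f ∈ symbPow (edgeIdealF K E) q ↔
      ∀ C, Minimal (IsVertexCover E) C → f ∈ coverIdeal K C ^ q := by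
  simp only [symbPow, Submodule.mem_iInf, mem_associatedPrimes_edgeIdeal_iff]
  exact ⟨fun h C hC ↦ h _ ⟨C, hC, rfl⟩, fun h P ⟨C, hC, hP⟩ ↦ hP ▸ h C hC⟩

lemma edgeIdeal_pow_le_symbPow (q : ℕ) : edgeIdealF K E ^ q ≤ symbPow (edgeIdealF K E) q :=
  fun _ hf ↦ mem_symbPow_iff.2 fun _ hC ↦ Ideal.pow_right_mono hC.prop.edgeIdeal_le q hf

lemma symbPow_eq_pow_of_hasMFMC (hne : ∀ j, (E j).Nonempty) (h : HasMFMC E) (q : ℕ) :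
    symbPow (edgeIdealF K E) q = edgeIdealF K E ^ q := by
  refine le_antisymm (fun f hf ↦ ?_) (edgeIdeal_pow_le_symbPow q)
  refine mem_edgeIdeal_pow_iff.2 fun s hs ↦ (hasMFMC_iff hne).1 h s q fun C hC ↦ ?_
  obtain ⟨D, hDC, hD⟩ := hC.exists_minimal_le
  exact (mem_coverIdeal_pow_iff_support.1 (mem_symbPow_iff.1 hf D hD) s hs).trans
    (Finset.sum_le_sum_of_subset hDC)

lemma isReduced_gr_of_symbPow_eq
    (h : ∀ q, symbPow (edgeIdealF K E) q = edgeIdealF K E ^ q) :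
    IsReduced (reesAlgebra (edgeIdealF K E) ⧸ grKernel (edgeIdealF K E)) := by
  refine isReduced_gr_of_sq fun q f hf ↦ ?_
  rw [← h, mem_symbPow_iff] at hf ⊢
  exact fun C hC ↦ mem_coverIdeal_pow_succ_of_sq (hf C hC)

lemma hasMFMC_of_isReduced_gr (hne : ∀ j, (E j).Nonempty)
    (h : IsReduced (reesAlgebra (edgeIdealF K E) ⧸ grKernel (edgeIdealF K E))) : HasMFMC E := by
  refine hasMFMC_of_packing_homogeneous hne fun c k q hq hk ↦ ?_
  let s : Fin n →₀ ℕ := Finsupp.equivFunOnFinite.symm c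
  refine (monomial_mem_edgeIdeal_pow_iff (K := K) (c := s)).1
    (mem_pow_succ_of_isReduced_gr (k := k) (monomial_mem_edgeIdeal_pow_iff.2 hq) ?_)
  rw [monomial_pow, one_pow]
  exact monomial_mem_edgeIdeal_pow_iff.2 hk

lemma symbPow_le_pow_of_associatedPrimes_subset {q : ℕ}
    (h : associatedPrimes (MvPolynomial (Fin n) K) (MvPolynomial (Fin n) K ⧸ edgeIdealF K E ^ q) ⊆
      associatedPrimes (MvPolynomial (Fin n) K) (MvPolynomial (Fin n) K ⧸ edgeIdealF K E)) :
    symbPow (edgeIdealF K E) q ≤ edgeIdealF K E ^ q := by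
  intro f hf
  by_contra hn
  obtain ⟨P, hP, hle⟩ := exists_le_isAssociatedPrime_of_isNoetherianRing
    (MvPolynomial (Fin n) K) (Ideal.Quotient.mk (edgeIdealF K E ^ q) f)
    (mt Ideal.Quotient.eq_zero_iff_mem.1 hn)
  obtain ⟨C, hC, rfl⟩ := mem_associatedPrimes_edgeIdeal_iff.1 (h hP)
  refine prod_compl_notMem_coverIdeal (K := K) C
    ((isPrime_coverIdeal C).mem_of_pow_mem q (hle ?_))
  rw [Submodule.mem_colon_singleton, Submodule.mem_bot, ← Ideal.Quotient.mk_eq_mk,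
    ← Submodule.Quotient.mk_smul, Submodule.Quotient.mk_eq_zero, smul_eq_mul]
  exact pow_prod_compl_mul_mem hC (mem_symbPow_iff.1 hf C hC)

end CoverIdeal

/-- For a simple hypergraph `G` with edges `E 0, …, E (m-1)` and edge
ideal `I = I(G)`, the following are equivalent: (1) `G` has the max-flow-min-cut
property; (2) `I^{(q)} = I^q` for all `q ≥ 0`; (3) the associated graded ring
`gr_I = R(I)/I·R(I)` is reduced; (4) `I` is normally torsion-free, i.e. all powers of
`I` have the same associated primes. -/
theorem mfmc_tfae {n m : ℕ} (K : Type*) [Field K] (E : Fin m → Finset (Fin n))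
    (hne : ∀ j, (E j).Nonempty)
    (hsimple : ∀ j j' : Fin m, E j ⊆ E j' → j = j') :
    [ HasMFMC E,
      ∀ q : ℕ, symbPow (edgeIdealF K E) q = edgeIdealF K E ^ q,
      IsReduced ((reesAlgebra (edgeIdealF K E)) ⧸ grKernel (edgeIdealF K E)),
      ∀ q : ℕ, 1 ≤ q →
        associatedPrimes (MvPolynomial (Fin n) K)
            (MvPolynomial (Fin n) K ⧸ (edgeIdealF K E ^ q)) =
          associatedPrimes (MvPolynomial (Fin n) K)
            (MvPolynomial (Fin n) K ⧸ edgeIdealF K E) ].TFAE := by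
  tfae_have 1 → 2 := symbPow_eq_pow_of_hasMFMC hne
  tfae_have 2 → 3 := isReduced_gr_of_symbPow_eq
  tfae_have 3 → 1 := hasMFMC_of_isReduced_gr hne
  tfae_have 2 → 4 := by
    intro h q hq
    ext P
    rw [mem_associatedPrimes_edgeIdeal_iff, mem_associatedPrimes_edgeIdeal_pow_iff (by omega)]
    exact fun f hf ↦ h q ▸ mem_symbPow_iff.2 hf
  tfae_have 4 → 2 := by
    intro h q
    refine le_antisymm ?_ (edgeIdeal_pow_le_symbPow q)
    rcases Nat.eq_zero_or_pos q with rfl | hq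
    · simp
    · exact symbPow_le_pow_of_associatedPrimes_subset (h q hq).subset
  tfae_finish
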